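/- Let K ∈ ℝ, N ∈ (1,∞), D ∈ (0,∞), and let h be an MCP(K,N) density whose support has diameter at most D. Then λ[h] ≥ λ[h_{K,N,D}] if K ≤ 0, and λ[h] ≥ inf_{D' ∈ (0, min(D, D_{K,N})]} λ[h_{K,N,D'}] if K > 0. -/

import Mathlib

open MeasureTheory Filter

/-- The function `s_κ` from the paper. -/
noncomputable def sKappa (κ θ : ℝ) : ℝ :=
  if 0 < κ then Real.sin (Real.sqrt κ * θ) / Real.sqrt κ
  else if κ < 0 then Real.sinh (Real.sqrt (-κ) * θ) / Real.sqrt (-κ)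
  else θ

/-- The support of the measure `h · 𝓛¹`. -/
noncomputable def measSupport (h : ℝ → ℝ) : Set ℝ :=
  {x : ℝ | ∀ ε > 0,
    0 < (MeasureTheory.volume.withDensity (fun y => ENNReal.ofReal (h y))) (Metric.ball x ε)}

/-- A one-dimensional `MCP(K,N)` density. -/
def IsMCPDensity (K N : ℝ) (h : ℝ → ℝ) : Prop :=
  (∀ x, 0 ≤ h x) ∧ MeasureTheory.LocallyIntegrable h MeasureTheory.volume ∧
  ∀ x₀ ∈ measSupport h, ∀ x₁ ∈ measSupport h,
    (0 < K → x₀ ≠ x₁ → |x₁ - x₀| < Real.pi / Real.sqrt (K / (N - 1))) ∧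
    ∀ t ∈ Set.Icc (0:ℝ) 1,
      (sKappa (K / (N - 1)) ((1 - t) * |x₁ - x₀|) / sKappa (K / (N - 1)) |x₁ - x₀|) ^ (N - 1)
          * h x₀
        ≤ h (t * x₁ + (1 - t) * x₀)

/-- The model density `h_{K,N,D}`. -/
noncomputable def modelDensity (K N D : ℝ) (x : ℝ) : ℝ :=
  if x ∈ Set.Icc 0 (D / 2) then sKappa (K / (N - 1)) (D - x) ^ (N - 1)
  else if x ∈ Set.Icc (D / 2) D then sKappa (K / (N - 1)) x ^ (N - 1)
  else 0

/-- Locally Lipschitz functions on a subset `I` of the reals. -/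
def LocLipschitzOn (f : ℝ → ℝ) (I : Set ℝ) : Prop :=
  ∀ x ∈ I, ∃ ε > 0, ∃ C : NNReal, LipschitzOnWith C f (I ∩ Metric.ball x ε)

/-- The local Lipschitz slope `|∇f|(x)` relative to `I`. -/
noncomputable def slopeOn (f : ℝ → ℝ) (I : Set ℝ) (x : ℝ) : ℝ :=
  Filter.limsup (fun y => |f y - f x| / |y - x|) (nhdsWithin x (I \ {x}))

/-- The Poincaré constant `λ[h, I]` of the density `h` on `I`. -/
noncomputable def poincareConst (h : ℝ → ℝ) (I : Set ℝ) : ℝ :=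
  sInf { r : ℝ | ∃ f : ℝ → ℝ, LocLipschitzOn f I ∧
    (∫ x in I, f x * h x) = 0 ∧
    (0 < ∫ x in I, (f x) ^ 2 * h x) ∧
    MeasureTheory.IntegrableOn (fun x => (f x) ^ 2 * h x) I ∧
    r = (∫ x in I, (slopeOn f I x) ^ 2 * h x) / (∫ x in I, (f x) ^ 2 * h x) }

/-!
Contracting towards an endpoint `z` of the support, the MCP inequality says that
`h (z ± u) / s_κ(u) ^ (N - 1)` is nonincreasing in `u`, where `κ = K / (N - 1)`. On the half
`[D / 2, D]` the model density is `s_κ ^ (N - 1)`, so there `h` is a nonincreasing multiple of it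
(when `K ≤ 0` a support shorter than `D` is first stretched to length `D`, since
`s_κ(α y) / s_κ(y)` is nonincreasing for `α ≤ 1`).

The spectral gap of the model, tested on odd reflections, gives a mixed Dirichlet–Neumann
inequality on `[D / 2, D]`, and, extending test functions by constants, on each truncation
`[D / 2, r]`. Integrating over `r` against a nonincreasing multiplier, as in the layer cake formula,
transfers the inequality to `h` on either half of its support. Subtracting from a mean-zero function
its value at the midpoint only increases its `L²` norm, so the two halves glue to the full Poincaré
inequality for `h`.
-/

section

open Set
open scoped NNReal Topology

section LocalSlope

variable {f g : ℝ → ℝ} {I : Set ℝ} {C : ℝ≥0}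

lemma slopeOn_univ_of_differentiableAt {x : ℝ} (hf : DifferentiableAt ℝ f x) :
    slopeOn f univ x = |deriv f x| := by
  have hslope := hf.hasDerivAt.tendsto_slope.abs
  rw [slopeOn, ← compl_eq_univ_sdiff]
  refine (hslope.congr fun y => ?_).limsup_eq
  rw [slope_def_field, abs_div]

lemma ae_slopeOn_univ_eq_abs_deriv (hg : LipschitzWith C g) (hI : IsOpen I) (hfg : EqOn f g I) :
    ∀ᵐ x, x ∈ I → slopeOn f univ x = |deriv g x| := by
  filter_upwards [hg.ae_differentiableAt_real] with x hx hxI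
  have heq : f =ᶠ[𝓝 x] g := hfg.eventuallyEq_of_mem (hI.mem_nhds hxI)
  rw [slopeOn_univ_of_differentiableAt (heq.symm.differentiableAt_iff.mp hx), heq.deriv_eq]

lemma LocLipschitzOn.locallyLipschitzOn (hf : LocLipschitzOn f I) : LocallyLipschitzOn I f := by
  intro x hx
  obtain ⟨ε, hε, C, hC⟩ := hf x hx
  exact ⟨C, _, inter_mem_nhdsWithin I (Metric.ball_mem_nhds x hε), hC⟩

lemma LocLipschitzOn.exists_lipschitzWith_eqOn (hf : LocLipschitzOn f I) {s : Set ℝ} (hsI : s ⊆ I)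
    (hs : IsCompact s) : ∃ C g, LipschitzWith C g ∧ EqOn f g s := by
  obtain ⟨C, hC⟩ := (hf.locallyLipschitzOn.mono hsI).exists_lipschitzOnWith_of_compact hs
  exact ⟨C, hC.extend_real⟩

lemma locLipschitzOn_of_lipschitzWith (hf : LipschitzWith C f) : LocLipschitzOn f I :=
  fun _ _ => ⟨1, one_pos, C, hf.lipschitzOnWith⟩

end LocalSlope

section WeightedIntegrals

variable {f g q w : ℝ → ℝ} {a b : ℝ} {C : ℝ≥0}

lemma integrableOn_deriv_sq_mul (hf : LipschitzWith C f) {s : Set ℝ} (hw : IntegrableOn w s) :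
    IntegrableOn (fun x => deriv f x ^ 2 * w x) s := by
  refine hw.bdd_mul (c := (C : ℝ) ^ 2) ((measurable_deriv f).pow_const 2).aestronglyMeasurable
    (.of_forall fun x => ?_)
  rw [norm_pow]
  gcongr
  exact norm_deriv_le_of_lipschitz hf

lemma integrableOn_mul_of_continuous (hq : Continuous q) (hw : IntegrableOn w (Icc a b)) :
    IntegrableOn (fun x => q x * w x) (Icc a b) :=
  hw.continuousOn_mul hq.continuousOn isCompact_Icc

lemma integrable_mul_of_continuous (hq : Continuous q) (hw : IntegrableOn w (Icc a b))
    (hw0 : ∀ᵐ x, x ∉ Icc a b → w x = 0) : Integrable fun x => q x * w x := by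
  refine (integrableOn_mul_of_continuous hq hw).integrable_of_ae_notMem_eq_zero ?_
  filter_upwards [hw0] with x hx hxI
  rw [hx hxI, mul_zero]

lemma setIntegral_mul_eq_integral_mul (hw0 : ∀ᵐ x, x ∉ Icc a b → w x = 0) (q : ℝ → ℝ) :
    ∫ x in Icc a b, q x * w x = ∫ x, q x * w x := by
  refine setIntegral_eq_integral_of_ae_compl_eq_zero ?_
  filter_upwards [hw0] with x hx hxI
  rw [hx hxI, mul_zero]

lemma setIntegral_deriv_sq_mul_congr (hfg : EqOn f g (Ioo a b)) :
    ∫ x in Icc a b, deriv f x ^ 2 * w x = ∫ x in Icc a b, deriv g x ^ 2 * w x := by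
  rw [integral_Icc_eq_integral_Ioo, integral_Icc_eq_integral_Ioo]
  refine setIntegral_congr_fun measurableSet_Ioo fun x hx => ?_
  simp only [(hfg.eventuallyEq_of_mem (isOpen_Ioo.mem_nhds hx)).deriv_eq]

lemma setIntegral_uIcc_affine (q : ℝ → ℝ) {β : ℝ} (hβ : β ≠ 0) (z c d : ℝ) :
    ∫ x in uIcc (z + β * c) (z + β * d), q x = |β| * ∫ t in uIcc c d, q (z + β * t) := by
  have himage : (fun t => z + β * t) '' uIcc c d = uIcc (z + β * c) (z + β * d) := by
    rw [← image_const_add_uIcc, ← image_const_mul_uIcc, image_image]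
  have hderiv (t : ℝ) : HasDerivAt (fun t => z + β * t) β t := by
    simpa using ((hasDerivAt_id t).const_mul β).const_add z
  have hinj : Function.Injective fun t => z + β * t :=
    (add_right_injective z).comp (mul_right_injective₀ hβ)
  rw [← himage, integral_image_eq_integral_abs_deriv_smul measurableSet_uIcc
    (fun t _ => (hderiv t).hasDerivWithinAt) hinj.injOn, ← integral_const_mul]
  simp only [smul_eq_mul]

lemma integral_eq_two_mul_setIntegral_Ioi {c : ℝ} (hq : ∀ x, q (c - x) = q x) :
    ∫ x, q x = 2 * ∫ x in Ioi (c / 2), q x := by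
  have habs (x : ℝ) : q (|x| + c / 2) = q (x + c / 2) := by
    rcases abs_choice x with hx | hx
    · rw [hx]
    · rw [hx, ← hq (x + c / 2)]
      ring_nf
  have hcomp := integral_comp_abs (f := fun x => q (x + c / 2))
  simp only [habs] at hcomp
  rw [integral_add_right_eq_self q (c / 2)] at hcomp
  have hshift := (measurePreserving_add_right volume (c / 2)).setIntegral_preimage_emb
    (measurableEmbedding_addRight _) q (Ioi (c / 2))
  rw [preimage_add_const_Ioi, sub_self] at hshift
  rw [hcomp, hshift]

lemma integral_eq_two_mul_setIntegral_Icc {c d : ℝ} (hq : ∀ x, q (c - x) = q x)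
    (hzero : ∀ x, d < x → q x = 0) : ∫ x, q x = 2 * ∫ x in Icc (c / 2) d, q x := by
  rw [integral_eq_two_mul_setIntegral_Ioi hq, integral_Icc_eq_integral_Ioc,
    setIntegral_eq_of_subset_of_forall_sdiff_eq_zero measurableSet_Ioi Ioc_subset_Ioi_self]
  exact fun x hx => hzero x (not_le.mp fun hxd => hx.2 ⟨hx.1, hxd⟩)

lemma integral_sq_mul_le_integral_sub_sq_mul {X : Type*} [MeasurableSpace X] {μ : Measure X}
    {f w : X → ℝ} (hw : 0 ≤ᵐ[μ] w) (hwi : Integrable w μ)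
    (hfw : Integrable (fun x => f x * w x) μ) (hf2w : Integrable (fun x => f x ^ 2 * w x) μ)
    (hmean : ∫ x, f x * w x ∂μ = 0) (e : ℝ) :
    ∫ x, f x ^ 2 * w x ∂μ ≤ ∫ x, (f x - e) ^ 2 * w x ∂μ := by
  have hsub : Integrable (fun x => f x ^ 2 * w x - 2 * e * (f x * w x)) μ :=
    hf2w.sub (hfw.const_mul _)
  have hexpand : ∫ x, (f x - e) ^ 2 * w x ∂μ = ∫ x, f x ^ 2 * w x ∂μ + e ^ 2 * ∫ x, w x ∂μ := by
    calc ∫ x, (f x - e) ^ 2 * w x ∂μ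
        = ∫ x, (f x ^ 2 * w x - 2 * e * (f x * w x) + e ^ 2 * w x) ∂μ := by
          congr 1 with x; ring
      _ = ∫ x, f x ^ 2 * w x ∂μ - 2 * e * ∫ x, f x * w x ∂μ + e ^ 2 * ∫ x, w x ∂μ := by
          rw [integral_add hsub (hwi.const_mul _), integral_sub hf2w (hfw.const_mul _),
            integral_const_mul, integral_const_mul]
      _ = ∫ x, f x ^ 2 * w x ∂μ + e ^ 2 * ∫ x, w x ∂μ := by rw [hmean]; ring
  rw [hexpand]
  exact le_add_of_nonneg_right (mul_nonneg (sq_nonneg e) (integral_nonneg_of_ae hw))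

end WeightedIntegrals

section PoincareConstant

variable {h f : ℝ → ℝ} {I : Set ℝ} {C : ℝ≥0}

lemma poincareConst_nonneg (hh : ∀ x, 0 ≤ h x) (I : Set ℝ) : 0 ≤ poincareConst h I := by
  refine Real.sInf_nonneg ?_
  rintro r ⟨f, -, -, hpos, -, rfl⟩
  exact div_nonneg (integral_nonneg fun x => mul_nonneg (sq_nonneg _) (hh x)) hpos.le

lemma poincareConst_mul_integral_sq_le (hh : ∀ x, 0 ≤ h x) (hf : LipschitzWith C f)
    (hmean : ∫ x, f x * h x = 0) (hint : Integrable fun x => f x ^ 2 * h x) :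
    poincareConst h univ * ∫ x, f x ^ 2 * h x ≤ ∫ x, deriv f x ^ 2 * h x := by
  have hnonneg (q : ℝ → ℝ) : 0 ≤ ∫ x, q x ^ 2 * h x :=
    integral_nonneg fun x => mul_nonneg (sq_nonneg _) (hh x)
  have hslope : ∫ x, slopeOn f univ x ^ 2 * h x = ∫ x, deriv f x ^ 2 * h x := by
    refine integral_congr_ae ?_
    filter_upwards [ae_slopeOn_univ_eq_abs_deriv hf isOpen_univ (eqOn_refl f univ)] with x hx
    rw [hx trivial, sq_abs]
  rcases (hnonneg f).eq_or_lt with hzero | hpos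
  · rw [← hzero, mul_zero]
    exact hnonneg _
  · rw [← le_div_iff₀ hpos]
    refine csInf_le ⟨0, ?_⟩ ⟨f, locLipschitzOn_of_lipschitzWith hf, ?_⟩
    · rintro r ⟨f, -, -, -, -, rfl⟩
      simpa only [setIntegral_univ] using div_nonneg (hnonneg _) (hnonneg _)
    · simpa only [setIntegral_univ, integrableOn_univ, hslope, and_true] using ⟨hmean, hpos, hint⟩

lemma exists_locLipschitzOn_setIntegral_mul_eq_zero (hh : ∀ x, 0 ≤ h x) (h0 : IntegrableOn h I)
    (h1 : IntegrableOn (fun x => x * h x) I) (h2 : IntegrableOn (fun x => x ^ 2 * h x) I)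
    (hpos : 0 < ∫ x in I, h x) :
    ∃ f, LocLipschitzOn f I ∧ ∫ x in I, f x * h x = 0 ∧ 0 < ∫ x in I, f x ^ 2 * h x ∧
      IntegrableOn (fun x => f x ^ 2 * h x) I := by
  set e := (∫ x in I, x * h x) / ∫ x in I, h x with he
  have hmean : ∫ x in I, (x - e) * h x = 0 := by
    simp only [sub_mul]
    rw [integral_sub h1 (h0.const_mul e), integral_const_mul, he, div_mul_cancel₀ _ hpos.ne',
      sub_self]
  have hint : IntegrableOn (fun x => (x - e) ^ 2 * h x) I :=
    ((h2.sub (h1.const_mul (2 * e))).add (h0.const_mul (e ^ 2))).congr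
      (.of_forall fun x => by simp only [Pi.add_apply, Pi.sub_apply]; ring)
  have hnonneg (x : ℝ) : 0 ≤ (x - e) ^ 2 * h x := mul_nonneg (sq_nonneg _) (hh x)
  refine ⟨fun x => x - e, locLipschitzOn_of_lipschitzWith (LipschitzWith.id.sub (.const e)), hmean,
    (integral_nonneg hnonneg).lt_of_ne' fun hzero => hpos.ne' ?_, hint⟩
  refine integral_eq_zero_of_ae ?_
  filter_upwards [(integral_eq_zero_iff_of_nonneg hnonneg hint).mp hzero,
    (volume.restrict I).ae_ne e] with x hx hxe
  exact (mul_eq_zero.mp hx).resolve_left (pow_ne_zero 2 (sub_ne_zero.mpr hxe))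

lemma le_poincareConst_univ {a b l : ℝ} (hh : ∀ x, 0 ≤ h x) (hhi : IntegrableOn h (Icc a b))
    (hh0 : ∀ᵐ x, x ∉ Icc a b → h x = 0) (hpos : 0 < ∫ x, h x)
    (hpoincare : ∀ C g, LipschitzWith C g → ∫ x in Icc a b, g x * h x = 0 →
      l * ∫ x in Icc a b, g x ^ 2 * h x ≤ ∫ x in Icc a b, deriv g x ^ 2 * h x) :
    l ≤ poincareConst h univ := by
  refine le_csInf ?_ ?_
  · have hmoment (n : ℕ) : IntegrableOn (fun x => x ^ n * h x) univ :=
      (integrable_mul_of_continuous (continuous_pow n) hhi hh0).integrableOn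
    obtain ⟨f, hf, hmean, hsq, hint⟩ := exists_locLipschitzOn_setIntegral_mul_eq_zero (I := univ) hh
      (by simpa using hmoment 0) (by simpa using hmoment 1) (hmoment 2) (by simpa using hpos)
    exact ⟨_, f, hf, hmean, hsq, hint, rfl⟩
  · rintro r ⟨f, hf, hmean, hsq, -, rfl⟩
    obtain ⟨C, g, hg, hfg⟩ :=
      hf.exists_lipschitzWith_eqOn (subset_univ (Icc a b)) isCompact_Icc
    have hcongr (n : ℕ) : ∫ x, f x ^ n * h x = ∫ x in Icc a b, g x ^ n * h x := by
      rw [← setIntegral_mul_eq_integral_mul hh0 (fun x => f x ^ n)]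
      exact setIntegral_congr_fun measurableSet_Icc fun x hx => by simp only [hfg hx]
    have hslope : ∫ x, slopeOn f univ x ^ 2 * h x = ∫ x in Icc a b, deriv g x ^ 2 * h x := by
      rw [← setIntegral_mul_eq_integral_mul hh0 (fun x => slopeOn f univ x ^ 2),
        integral_Icc_eq_integral_Ioo, integral_Icc_eq_integral_Ioo]
      refine setIntegral_congr_ae measurableSet_Ioo ?_
      filter_upwards [ae_slopeOn_univ_eq_abs_deriv hg isOpen_Ioo (hfg.mono Ioo_subset_Icc_self)]
        with x hx hxI
      rw [hx hxI, sq_abs]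
    have hmean_g : ∫ x in Icc a b, g x * h x = 0 := by
      have hfirst := hcongr 1
      simp only [pow_one] at hfirst
      rw [← hfirst, ← setIntegral_univ, hmean]
    rw [le_div_iff₀ hsq]
    simpa only [setIntegral_univ, hslope, hcongr 2] using hpoincare C g hg hmean_g

end PoincareConstant

section LayerCake

variable {c d : ℝ}

lemma exists_Icc_inter_ae_eq_Icc_of_isLowerSet {L : Set ℝ} (hL : IsLowerSet L) (hcd : c ≤ d) :
    ∃ r ∈ Icc c d, (Icc c d ∩ L : Set ℝ) =ᵐ[volume] Icc c r := by
  rcases (Icc c d ∩ L).eq_empty_or_nonempty with hempty | hne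
  · refine ⟨c, left_mem_Icc.mpr hcd, ?_⟩
    rw [hempty, Icc_self]
    exact (ae_eq_empty.mpr Real.volume_singleton).symm
  · have hbdd : BddAbove (Icc c d ∩ L) := bddAbove_Icc.mono inter_subset_left
    set r := sSup (Icc c d ∩ L)
    have hle : r ≤ d := csSup_le hne fun x hx => hx.1.2
    have hsub : Icc c d ∩ L ⊆ Icc c r := fun x hx => ⟨hx.1.1, le_csSup hbdd hx⟩
    have hsup : Ico c r ⊆ Icc c d ∩ L := fun x hx => by
      obtain ⟨y, hy, hxy⟩ := exists_lt_of_lt_csSup hne hx.2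
      exact ⟨⟨hx.1, hx.2.le.trans hle⟩, hL hxy.le hy.2⟩
    have hcr : c ≤ r := hne.elim fun x hx => (hsub hx).1.trans (hsub hx).2
    exact ⟨r, ⟨hcr, hle⟩, hsub.eventuallyLE.antisymm
      (Ico_ae_eq_Icc.symm.le.trans hsup.eventuallyLE)⟩

lemma integral_le_integral_of_antitone {X : Type*} [Preorder X] [MeasurableSpace X]
    {μ ν : Measure X} (hμν : ∀ L, IsLowerSet L → μ L ≤ ν L) {σ : X → ℝ} (hσ : Antitone σ)
    (hσm : Measurable σ) (hσ0 : 0 ≤ σ) (hσi : Integrable σ ν) : ∫ x, σ x ∂μ ≤ ∫ x, σ x ∂ν := by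
  rw [integral_eq_lintegral_of_nonneg_ae (.of_forall hσ0) hσm.aestronglyMeasurable,
    integral_eq_lintegral_of_nonneg_ae (.of_forall hσ0) hσm.aestronglyMeasurable]
  refine ENNReal.toReal_mono hσi.lintegral_lt_top.ne ?_
  rw [lintegral_eq_lintegral_meas_lt μ (.of_forall hσ0) hσm.aemeasurable,
    lintegral_eq_lintegral_meas_lt ν (.of_forall hσ0) hσm.aemeasurable]
  exact lintegral_mono fun t => hμν _ fun x y hyx hx => lt_of_lt_of_le hx (hσ hyx)

lemma withDensity_ofReal_apply_of_ae_eq {u : ℝ → ℝ} {s t L : Set ℝ} (hL : MeasurableSet L)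
    (hs : MeasurableSet s) (hu : IntegrableOn u s) (hu0 : ∀ x ∈ s, 0 ≤ u x)
    (hst : (s ∩ L : Set ℝ) =ᵐ[volume] t) :
    ((volume.restrict s).withDensity fun x => ENNReal.ofReal (u x)) L =
      ENNReal.ofReal (∫ x in t, u x) := by
  rw [withDensity_apply _ hL, Measure.restrict_restrict hL, inter_comm, ← setIntegral_congr_set hst,
    ofReal_integral_eq_lintegral_ofReal (hu.mono_set inter_subset_left)]
  exact ae_restrict_of_ae_restrict_of_subset inter_subset_left (ae_restrict_of_forall_mem hs hu0)

lemma setIntegral_mul_le_setIntegral_mul_of_antitoneOn {u v ρ : ℝ → ℝ} (hcd : c ≤ d)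
    (hu : IntegrableOn u (Icc c d)) (hu0 : ∀ x ∈ Icc c d, 0 ≤ u x)
    (hv : IntegrableOn v (Icc c d)) (hv0 : ∀ x ∈ Icc c d, 0 ≤ v x)
    (huv : ∀ r ∈ Icc c d, ∫ x in Icc c r, u x ≤ ∫ x in Icc c r, v x)
    (hρ : AntitoneOn ρ (Icc c d)) (hρ0 : ∀ x ∈ Icc c d, 0 ≤ ρ x) :
    ∫ x in Icc c d, ρ x * u x ≤ ∫ x in Icc c d, ρ x * v x := by
  set σ : ℝ → ℝ := IccExtend hcd ((Icc c d).domRestrict ρ)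
  have hσ : Antitone σ := fun x y hxy =>
    hρ (projIcc c d hcd x).2 (projIcc c d hcd y).2 (monotone_projIcc hcd hxy)
  have hσ0 : 0 ≤ σ := fun x => hρ0 _ (projIcc c d hcd x).2
  have hσρ : EqOn σ ρ (Icc c d) := fun x hx => IccExtend_of_mem hcd _ hx
  have hintegral {w : ℝ → ℝ} (hw : IntegrableOn w (Icc c d)) (hw0 : ∀ x ∈ Icc c d, 0 ≤ w x) :
      ∫ x, σ x ∂(volume.restrict (Icc c d)).withDensity (fun x => ENNReal.ofReal (w x)) =
        ∫ x in Icc c d, ρ x * w x := by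
    rw [integral_withDensity_eq_integral_toReal_smul₀ hw.aemeasurable.ennreal_ofReal
      (.of_forall fun _ => ENNReal.ofReal_lt_top)]
    refine setIntegral_congr_fun measurableSet_Icc fun x hx => ?_
    simp only [smul_eq_mul, ENNReal.toReal_ofReal (hw0 x hx), hσρ hx, mul_comm]
  have := isFiniteMeasure_withDensity_ofReal hv.2
  rw [← hintegral hu hu0, ← hintegral hv hv0]
  refine integral_le_integral_of_antitone (fun L hL => ?_) hσ hσ.measurable hσ0
    (.of_bound hσ.measurable.aestronglyMeasurable (σ c) (.of_forall fun x => ?_))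
  · obtain ⟨r, hr, hLr⟩ := exists_Icc_inter_ae_eq_Icc_of_isLowerSet hL hcd
    have hLm : MeasurableSet L := hL.ordConnected.measurableSet
    rw [withDensity_ofReal_apply_of_ae_eq hLm measurableSet_Icc hu hu0 hLr,
      withDensity_ofReal_apply_of_ae_eq hLm measurableSet_Icc hv hv0 hLr]
    exact ENNReal.ofReal_le_ofReal (huv r hr)
  · rw [Real.norm_of_nonneg (hσ0 x), hσρ (left_mem_Icc.mpr hcd)]
    exact hρ (left_mem_Icc.mpr hcd) (projIcc c d hcd x).2 (projIcc c d hcd x).2.1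

end LayerCake

/-- The mixed Dirichlet–Neumann Poincaré inequality with constant `l` for the weight `w` between
the Dirichlet endpoint `c` and the free endpoint `d`, which may lie on either side of `c`. -/
def MixedPoincare (w : ℝ → ℝ) (c d l : ℝ) : Prop :=
  ∀ ⦃C : ℝ≥0⦄ ⦃φ : ℝ → ℝ⦄, LipschitzWith C φ → φ c = 0 →
    l * ∫ x in uIcc c d, φ x ^ 2 * w x ≤ ∫ x in uIcc c d, deriv φ x ^ 2 * w x

section MixedPoincare

variable {w g h H : ℝ → ℝ} {a b c d l m r : ℝ}

lemma mixedPoincare_of_symmetric (hH0 : ∀ x, 0 ≤ H x) (hHi : IntegrableOn H (Icc (c - d) d))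
    (hsymm : ∀ x, H (c - x) = H x) (hzero : ∀ x, d < x → H x = 0) (hcd : c / 2 ≤ d) :
    MixedPoincare H (c / 2) d (poincareConst H univ) := by
  intro C φ hφ hφc
  -- The odd reflection of `φ` in `c / 2` has zero mean, so it is admissible for the spectral gap.
  set G : ℝ → ℝ := fun x => φ (max x (c / 2)) - φ (max (c - x) (c / 2)) with hG_def
  have hG : LipschitzWith _ G := (hφ.comp (LipschitzWith.id.max_const _)).sub
    (hφ.comp (((LipschitzWith.const c).sub LipschitzWith.id).max_const _))
  have hGφ : EqOn G φ (Ici (c / 2)) := fun x hx => by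
    have hle : c - x ≤ c / 2 := by linarith [mem_Ici.mp hx]
    simp only [hG_def, max_eq_left (mem_Ici.mp hx), max_eq_right hle, hφc, sub_zero]
  have hGodd (x : ℝ) : G (c - x) = -G x := by simp only [hG_def, sub_sub_cancel, neg_sub]
  have hGderiv (x : ℝ) : deriv G (c - x) = deriv G x := by
    have hodd : G = fun y => -G (c - y) := by ext y; rw [hGodd, neg_neg]
    conv_rhs => rw [hodd, deriv.fun_neg, deriv_comp_const_sub, neg_neg]
  have hmean : ∫ x, G x * H x = 0 := by
    have hreflect := integral_sub_left_eq_self (fun x => G x * H x) volume c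
    simp only [hGodd, hsymm, neg_mul, integral_neg] at hreflect
    linarith
  have hHzero : ∀ᵐ x, x ∉ Icc (c - d) d → H x = 0 := .of_forall fun x hx => by
    rcases lt_or_ge d x with hdx | hxd
    · exact hzero x hdx
    · rw [← hsymm]
      exact hzero _ (by linarith [not_le.mp fun hcx => hx ⟨hcx, hxd⟩])
  have hfold {q : ℝ → ℝ} (hq : ∀ x, q (c - x) = q x) :
      ∫ x, q x * H x = 2 * ∫ x in Icc (c / 2) d, q x * H x :=
    integral_eq_two_mul_setIntegral_Icc (q := fun x => q x * H x) (fun x => by rw [hq, hsymm])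
      fun x hx => by rw [hzero x hx, mul_zero]
  have hGap := poincareConst_mul_integral_sq_le hH0 hG hmean
    (integrable_mul_of_continuous (hG.continuous.pow 2) hHi hHzero)
  rw [hfold fun x => by rw [hGodd, neg_sq], hfold fun x => by rw [hGderiv],
    setIntegral_deriv_sq_mul_congr (hGφ.mono (Ioo_subset_Ioi_self.trans Ioi_subset_Ici_self)),
    setIntegral_congr_fun (g := fun x => φ x ^ 2 * H x) measurableSet_Icc
      fun x hx => by simp only [hGφ hx.1]] at hGap
  rw [uIcc_of_le hcd]
  linarith

namespace MixedPoincare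

lemma truncate (hw : MixedPoincare w c d l) (hl : 0 ≤ l) (hw0 : ∀ x ∈ Icc c d, 0 ≤ w x)
    (hwi : IntegrableOn w (Icc c d)) (hr : r ∈ Icc c d) : MixedPoincare w c r l := by
  intro C φ hφ hφc
  set ψ : ℝ → ℝ := fun x => φ (min x r) with hψ_def
  have hψ : LipschitzWith _ ψ := hφ.comp (LipschitzWith.id.min_const r)
  have hψφ : EqOn ψ φ (Iic r) := fun x hx => by simp only [hψ_def, min_eq_left (mem_Iic.mp hx)]
  have hψ_deriv (x : ℝ) (hx : x ∈ Icc c d \ Icc c r) : deriv ψ x = 0 := by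
    have hrx : r < x := not_le.mp fun hxr => hx.2 ⟨hx.1.1, hxr⟩
    have hconst : ψ =ᶠ[𝓝 x] fun _ => φ r := by
      filter_upwards [Ioi_mem_nhds hrx] with y hy
      simp only [hψ_def, min_eq_right (mem_Ioi.mp hy).le]
    rw [hconst.deriv_eq, deriv_const]
  have hsub : Icc c r ⊆ Icc c d := Icc_subset_Icc_right hr.2
  have hgap := hw hψ (by rw [hψφ hr.1, hφc])
  rw [uIcc_of_le (hr.1.trans hr.2)] at hgap
  rw [uIcc_of_le hr.1]
  calc l * ∫ x in Icc c r, φ x ^ 2 * w x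
      = l * ∫ x in Icc c r, ψ x ^ 2 * w x := by
        congr 1
        exact setIntegral_congr_fun measurableSet_Icc fun x hx => by simp only [hψφ hx.2]
    _ ≤ l * ∫ x in Icc c d, ψ x ^ 2 * w x := by
        refine mul_le_mul_of_nonneg_left (setIntegral_mono_set
          (integrableOn_mul_of_continuous (hψ.continuous.pow 2) hwi) ?_ hsub.eventuallyLE) hl
        exact ae_restrict_of_forall_mem measurableSet_Icc fun x hx =>
          mul_nonneg (sq_nonneg _) (hw0 x hx)
    _ ≤ ∫ x in Icc c d, deriv ψ x ^ 2 * w x := hgap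
    _ = ∫ x in Icc c r, deriv ψ x ^ 2 * w x :=
        setIntegral_eq_of_subset_of_forall_sdiff_eq_zero measurableSet_Icc hsub
          fun x hx => by rw [hψ_deriv x hx, zero_pow two_ne_zero, zero_mul]
    _ = ∫ x in Icc c r, deriv φ x ^ 2 * w x :=
        setIntegral_deriv_sq_mul_congr (hψφ.mono fun x hx => hx.2.le)

lemma of_antitoneOn_div (hw : MixedPoincare w c d l) (hl : 0 ≤ l) (hcd : c ≤ d)
    (hwi : IntegrableOn w (Icc c d)) (hw0 : ∀ x ∈ Icc c d, 0 < w x)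
    (hg0 : ∀ x ∈ Icc c d, 0 ≤ g x) (hgw : AntitoneOn (fun x => g x / w x) (Icc c d)) :
    MixedPoincare g c d l := by
  intro C φ hφ hφc
  have hwn (x : ℝ) (hx : x ∈ Icc c d) : 0 ≤ w x := (hw0 x hx).le
  have hcancel (q : ℝ → ℝ) :
      ∫ x in Icc c d, q x * g x = ∫ x in Icc c d, g x / w x * (q x * w x) := by
    refine setIntegral_congr_fun measurableSet_Icc fun x hx => ?_
    have hne : w x ≠ 0 := (hw0 x hx).ne'
    field_simp
  rw [uIcc_of_le hcd, ← integral_const_mul]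
  simp_rw [← mul_assoc l]
  rw [hcancel fun x => l * φ x ^ 2, hcancel fun x => deriv φ x ^ 2]
  refine setIntegral_mul_le_setIntegral_mul_of_antitoneOn hcd
    (integrableOn_mul_of_continuous ((hφ.continuous.pow 2).const_mul l) hwi)
    (fun x hx => mul_nonneg (mul_nonneg hl (sq_nonneg _)) (hwn x hx))
    (integrableOn_deriv_sq_mul hφ hwi) (fun x hx => mul_nonneg (sq_nonneg _) (hwn x hx))
    (fun r hr => ?_) hgw (fun x hx => div_nonneg (hg0 x hx) (hwn x hx))
  have hgap := hw.truncate hl hwn hwi hr hφ hφc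
  rw [uIcc_of_le hr.1, ← integral_const_mul] at hgap
  simpa only [mul_assoc] using hgap

lemma mono_const {l' : ℝ} (hw : MixedPoincare w c d l) (hw0 : ∀ x ∈ uIcc c d, 0 ≤ w x)
    (hl : l' ≤ l) : MixedPoincare w c d l' := fun _ _ hφ hφc =>
  (mul_le_mul_of_nonneg_right hl (setIntegral_nonneg measurableSet_uIcc fun x hx =>
    mul_nonneg (sq_nonneg _) (hw0 x hx))).trans (hw hφ hφc)

lemma of_comp_affine {z β : ℝ} (hβ : β ≠ 0)
    (hw : MixedPoincare (fun t => h (z + β * t)) c d l) :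
    MixedPoincare h (z + β * c) (z + β * d) (l / β ^ 2) := by
  intro C φ hφ hφc
  have haffine : LipschitzWith ‖β‖₊ fun t : ℝ => z + β * t :=
    .of_dist_le_mul fun x y => by
      rw [dist_add_left, Real.dist_eq, Real.dist_eq, ← mul_sub, abs_mul, coe_nnnorm,
        Real.norm_eq_abs]
  have hderiv (t : ℝ) : deriv (fun t => φ (z + β * t)) t = β * deriv φ (z + β * t) := by
    have hmul := deriv_comp_mul_left β (fun t => φ (z + t)) t
    rwa [deriv_comp_const_add, smul_eq_mul] at hmul
  have hgap := hw (hφ.comp haffine) hφc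
  simp only [Function.comp_def, hderiv, mul_pow, mul_assoc, integral_const_mul] at hgap
  rw [setIntegral_uIcc_affine _ hβ, setIntegral_uIcc_affine _ hβ, mul_left_comm]
  refine mul_le_mul_of_nonneg_left ?_ (abs_nonneg β)
  rwa [div_mul_eq_mul_div, div_le_iff₀' (by positivity)]

lemma mul_integral_sq_le (ha : MixedPoincare h m a l) (hb : MixedPoincare h m b l) (hl : 0 ≤ l)
    (hm : m ∈ Icc a b) (hh0 : ∀ x ∈ Icc a b, 0 ≤ h x) (hhi : IntegrableOn h (Icc a b))
    {C : ℝ≥0} {f : ℝ → ℝ} (hf : LipschitzWith C f) (hmean : ∫ x in Icc a b, f x * h x = 0) :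
    l * ∫ x in Icc a b, f x ^ 2 * h x ≤ ∫ x in Icc a b, deriv f x ^ 2 * h x := by
  set φ : ℝ → ℝ := fun x => f x - f m with hφ_def
  have hφ : LipschitzWith _ φ := hf.sub (.const (f m))
  have hφm : φ m = 0 := sub_self _
  have hsplit {q : ℝ → ℝ} (hq : IntegrableOn q (Icc a b)) :
      ∫ x in Icc a b, q x = (∫ x in uIcc m a, q x) + ∫ x in uIcc m b, q x := by
    rw [uIcc_of_ge hm.1, uIcc_of_le hm.2, ← Icc_union_Ioc_eq_Icc hm.1 hm.2,
      setIntegral_union ((Iic_disjoint_Ioc le_rfl).mono_left Icc_subset_Iic_self) measurableSet_Ioc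
        (hq.mono_set (Icc_subset_Icc_right hm.2))
        (hq.mono_set (Ioc_subset_Icc_self.trans (Icc_subset_Icc_left hm.1))),
      ← integral_Icc_eq_integral_Ioc (x := m)]
  calc l * ∫ x in Icc a b, f x ^ 2 * h x
      ≤ l * ∫ x in Icc a b, φ x ^ 2 * h x :=
        mul_le_mul_of_nonneg_left (integral_sq_mul_le_integral_sub_sq_mul
          (ae_restrict_of_forall_mem measurableSet_Icc hh0) hhi
          (integrableOn_mul_of_continuous hf.continuous hhi)
          (integrableOn_mul_of_continuous (hf.continuous.pow 2) hhi) hmean (f m)) hl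
    _ = (l * ∫ x in uIcc m a, φ x ^ 2 * h x) + l * ∫ x in uIcc m b, φ x ^ 2 * h x := by
        rw [hsplit (q := fun x => φ x ^ 2 * h x)
          (integrableOn_mul_of_continuous (hφ.continuous.pow 2) hhi), mul_add]
    _ ≤ (∫ x in uIcc m a, deriv φ x ^ 2 * h x) + ∫ x in uIcc m b, deriv φ x ^ 2 * h x :=
        add_le_add (ha hφ hφm) (hb hφ hφm)
    _ = ∫ x in Icc a b, deriv f x ^ 2 * h x := by
        rw [← hsplit (integrableOn_deriv_sq_mul hφ hhi)]
        simp only [hφ_def, deriv_sub_const]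

end MixedPoincare

end MixedPoincare

section ModelDensity

variable {κ α θ x y K N D : ℝ}

lemma sKappa_zero (κ : ℝ) : sKappa κ 0 = 0 := by
  unfold sKappa
  split_ifs <;> simp

lemma continuous_sKappa (κ : ℝ) : Continuous (sKappa κ) := by
  unfold sKappa
  split_ifs <;> fun_prop

lemma sKappa_pos (hθ : 0 < θ) (hκ : 0 < κ → θ < Real.pi / √κ) : 0 < sKappa κ θ := by
  unfold sKappa
  split_ifs with hpos hneg
  · have hsqrt := Real.sqrt_pos.mpr hpos
    exact div_pos (Real.sin_pos_of_pos_of_lt_pi (mul_pos hsqrt hθ)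
      ((lt_div_iff₀' hsqrt).mp (hκ hpos))) hsqrt
  · have hsqrt := Real.sqrt_pos.mpr (neg_pos.mpr hneg)
    exact div_pos (Real.sinh_pos_iff.mpr (mul_pos hsqrt hθ)) hsqrt
  · exact hθ

lemma sKappa_nonneg (hθ : 0 ≤ θ) (hκ : 0 < κ → θ ≤ Real.pi / √κ) : 0 ≤ sKappa κ θ := by
  unfold sKappa
  split_ifs with hpos hneg
  · exact div_nonneg (Real.sin_nonneg_of_nonneg_of_le_pi (by positivity)
      ((le_div_iff₀' (Real.sqrt_pos.mpr hpos)).mp (hκ hpos))) (Real.sqrt_nonneg κ)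
  · exact div_nonneg (Real.sinh_nonneg_iff.mpr (by positivity)) (Real.sqrt_nonneg (-κ))
  · exact hθ

lemma sKappa_nonneg_of_pos (hs : ∀ θ ∈ Ioc 0 D, 0 < sKappa κ θ) (hθ : θ ∈ Icc 0 D) :
    0 ≤ sKappa κ θ := by
  rcases hθ.1.eq_or_lt with rfl | hpos
  · exact (sKappa_zero κ).ge
  · exact (hs θ ⟨hpos, hθ.2⟩).le

lemma mul_cosh_mul_sinh_le (hα : α ∈ Icc 0 1) (hy : 0 ≤ y) :
    α * Real.cosh (α * y) * Real.sinh y ≤ Real.sinh (α * y) * Real.cosh y := by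
  have hderiv (z : ℝ) : HasDerivAt
      (fun z => α * Real.cosh (α * z) * Real.sinh z - Real.sinh (α * z) * Real.cosh z)
      ((α ^ 2 - 1) * (Real.sinh (α * z) * Real.sinh z)) z := by
    have hmul : HasDerivAt (fun z => α * z) α z := by simpa using (hasDerivAt_id z).const_mul α
    exact (((hmul.cosh.const_mul α).mul (Real.hasDerivAt_sinh z)).sub
      (hmul.sinh.mul (Real.hasDerivAt_cosh z))).congr_deriv (by ring)
  have hanti : AntitoneOn
      (fun z => α * Real.cosh (α * z) * Real.sinh z - Real.sinh (α * z) * Real.cosh z) (Ici 0) := by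
    refine antitoneOn_of_hasDerivWithinAt_nonpos (convex_Ici 0)
      (fun z _ => (hderiv z).continuousAt.continuousWithinAt)
      (fun z _ => (hderiv z).hasDerivWithinAt) fun z hz => ?_
    have hz : 0 ≤ z := interior_subset hz
    refine mul_nonpos_of_nonpos_of_nonneg (sub_nonpos.mpr (pow_le_one₀ hα.1 hα.2))
      (mul_nonneg ?_ ?_)
    · exact Real.sinh_nonneg_iff.mpr (mul_nonneg hα.1 hz)
    · exact Real.sinh_nonneg_iff.mpr hz
  simpa using hanti self_mem_Ici hy hy

lemma antitoneOn_sinh_mul_div_sinh (hα : α ∈ Icc 0 1) :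
    AntitoneOn (fun y => Real.sinh (α * y) / Real.sinh y) (Ioi 0) := by
  have hderiv (z : ℝ) (hz : z ∈ Ioi 0) : HasDerivAt (fun z => Real.sinh (α * z) / Real.sinh z)
      ((α * Real.cosh (α * z) * Real.sinh z - Real.sinh (α * z) * Real.cosh z) /
        Real.sinh z ^ 2) z := by
    have hmul : HasDerivAt (fun z => α * z) α z := by simpa using (hasDerivAt_id z).const_mul α
    exact (hmul.sinh.div (Real.hasDerivAt_sinh z) (Real.sinh_pos_iff.mpr hz).ne').congr_deriv
      (by ring)
  refine antitoneOn_of_hasDerivWithinAt_nonpos (convex_Ioi 0)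
    (fun z hz => (hderiv z hz).continuousAt.continuousWithinAt)
    (fun z hz => (hderiv z (interior_subset hz)).hasDerivWithinAt) fun z hz => ?_
  exact div_nonpos_of_nonpos_of_nonneg
    (sub_nonpos.mpr (mul_cosh_mul_sinh_le hα (mem_Ioi.mp (interior_subset hz)).le)) (sq_nonneg _)

lemma antitoneOn_sKappa_mul_div_sKappa (hκ : κ ≤ 0) (hα : α ∈ Icc 0 1) :
    AntitoneOn (fun y => sKappa κ (α * y) / sKappa κ y) (Ioi 0) := by
  intro x (hx : 0 < x) y (hy : 0 < y) hxy
  rcases hκ.eq_or_lt with rfl | hneg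
  · simp [sKappa, hx.ne', hy.ne']
  · have hsqrt := Real.sqrt_pos.mpr (neg_pos.mpr hneg)
    have hsinh := antitoneOn_sinh_mul_div_sinh hα (mul_pos hsqrt hx) (mul_pos hsqrt hy)
      (mul_le_mul_of_nonneg_left hxy hsqrt.le)
    simpa only [sKappa, if_neg hκ.not_gt, if_pos hneg, div_div_div_cancel_right₀ hsqrt.ne',
      mul_left_comm α] using hsinh

lemma modelDensity_eq_indicator (K N D : ℝ) : modelDensity K N D =
    (Icc 0 D).indicator fun x => sKappa (K / (N - 1)) (max x (D - x)) ^ (N - 1) := by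
  ext x
  simp only [modelDensity, indicator, mem_Icc]
  grind

lemma modelDensity_sub (K N D x : ℝ) : modelDensity K N D (D - x) = modelDensity K N D x := by
  simp only [modelDensity_eq_indicator, indicator, mem_Icc, sub_sub_cancel, max_comm, sub_nonneg,
    sub_le_self_iff, and_comm]

lemma modelDensity_of_lt (hx : D < x) : modelDensity K N D x = 0 := by
  rw [modelDensity_eq_indicator, indicator_of_notMem fun hxD => hx.not_ge hxD.2]

lemma modelDensity_of_mem_Icc (hx : x ∈ Icc (D / 2) D) :
    modelDensity K N D x = sKappa (K / (N - 1)) x ^ (N - 1) := by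
  have hle : D - x ≤ x := by linarith [hx.1]
  have hx0 : x ∈ Icc 0 D := ⟨by linarith [hx.1, hx.2], hx.2⟩
  rw [modelDensity_eq_indicator, indicator_of_mem hx0, max_eq_left hle]

lemma modelDensity_nonneg (hs : ∀ θ ∈ Icc 0 D, 0 ≤ sKappa (K / (N - 1)) θ) (x : ℝ) :
    0 ≤ modelDensity K N D x := by
  rw [modelDensity_eq_indicator]
  refine indicator_nonneg (fun x hx => Real.rpow_nonneg (hs _ ?_) _) x
  exact ⟨hx.1.trans (le_max_left _ _), max_le hx.2 (sub_le_self D hx.1)⟩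

lemma poincareConst_modelDensity_nonneg (hs : ∀ θ ∈ Icc 0 D, 0 ≤ sKappa (K / (N - 1)) θ) :
    0 ≤ poincareConst (modelDensity K N D) univ :=
  poincareConst_nonneg (modelDensity_nonneg hs) univ

lemma locallyIntegrable_modelDensity (hN : 1 ≤ N) : LocallyIntegrable (modelDensity K N D) := by
  rw [modelDensity_eq_indicator]
  refine Continuous.locallyIntegrable ?_ |>.indicator measurableSet_Icc
  exact ((continuous_sKappa _).comp (by fun_prop)).rpow_const fun _ => .inr (sub_nonneg.mpr hN)

lemma mixedPoincare_modelDensity (hN : 1 ≤ N) (hD : 0 ≤ D)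
    (hs : ∀ θ ∈ Icc 0 D, 0 ≤ sKappa (K / (N - 1)) θ) :
    MixedPoincare (modelDensity K N D) (D / 2) D (poincareConst (modelDensity K N D) univ) :=
  mixedPoincare_of_symmetric (modelDensity_nonneg hs)
    ((locallyIntegrable_modelDensity hN).integrableOn_isCompact isCompact_Icc)
    (modelDensity_sub K N D) (fun _ => modelDensity_of_lt) (half_le_self hD)

end ModelDensity

section Support

variable {h : ℝ → ℝ}

lemma measSupport_eq_support (h : ℝ → ℝ) :
    measSupport h = (volume.withDensity fun y => ENNReal.ofReal (h y)).support := by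
  ext x
  rw [Measure.mem_support_iff_forall]
  refine ⟨fun hx U hU => ?_, fun hx ε hε => hx _ (Metric.ball_mem_nhds x hε)⟩
  obtain ⟨ε, hε, hεU⟩ := Metric.mem_nhds_iff.mp hU
  exact (hx ε hε).trans_le (measure_mono hεU)

lemma withDensity_ofReal_eq_zero_iff (hm : AEMeasurable h) (s : Set ℝ) :
    (volume.withDensity fun y => ENNReal.ofReal (h y)) s = 0 ↔ ∀ᵐ x, x ∈ s → h x ≤ 0 := by
  rw [withDensity_apply_eq_zero' hm.ennreal_ofReal, measure_eq_zero_iff_ae_notMem]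
  refine eventually_congr (.of_forall fun x => ?_)
  simp only [mem_inter_iff, mem_ofPred_eq, ne_eq, ENNReal.ofReal_eq_zero]
  tauto

lemma ae_nonpos_of_notMem_measSupport (hm : AEMeasurable h) :
    ∀ᵐ x, x ∉ measSupport h → h x ≤ 0 := by
  rw [measSupport_eq_support]
  exact (withDensity_ofReal_eq_zero_iff hm _).mp Measure.measure_compl_support

lemma subset_measSupport_of_isOpen (hm : AEMeasurable h) {U : Set ℝ} (hU : IsOpen U)
    (hpos : ∀ x ∈ U, 0 < h x) : U ⊆ measSupport h := by
  intro c hc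
  rw [measSupport_eq_support, Measure.mem_support_iff_forall]
  intro V hV
  rw [pos_iff_ne_zero, Ne, withDensity_ofReal_eq_zero_iff hm]
  intro hnonpos
  refine (volume.measure_pos_of_mem_nhds (inter_mem hV (hU.mem_nhds hc))).ne' ?_
  rw [measure_eq_zero_iff_ae_notMem]
  filter_upwards [hnonpos] with x hx hxVU
  exact (hpos x hxVU.2).not_ge (hx hxVU.1)

lemma not_ae_nonpos_of_nonempty_measSupport (hm : AEMeasurable h) (hne : (measSupport h).Nonempty) :
    ¬ ∀ᵐ x, h x ≤ 0 := by
  intro hnonpos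
  obtain ⟨x, hx⟩ := hne
  refine (hx 1 one_pos).ne' ((withDensity_ofReal_eq_zero_iff hm _).mpr ?_)
  filter_upwards [hnonpos] with y hy _ using hy

lemma exists_mem_measSupport_pos (hm : AEMeasurable h) (hne : (measSupport h).Nonempty) :
    ∃ x ∈ measSupport h, 0 < h x := by
  by_contra! hnonpos
  refine not_ae_nonpos_of_nonempty_measSupport hm hne ?_
  filter_upwards [ae_nonpos_of_notMem_measSupport hm] with x hx
  by_cases hxS : x ∈ measSupport h
  exacts [hnonpos x hxS, hx hxS]

end Support

namespace IsMCPDensity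

variable {K N : ℝ} {h : ℝ → ℝ}

lemma aemeasurable (hMCP : IsMCPDensity K N h) : AEMeasurable h :=
  hMCP.2.1.aestronglyMeasurable.aemeasurable

lemma ae_eq_zero_of_notMem_measSupport (hMCP : IsMCPDensity K N h) :
    ∀ᵐ x, x ∉ measSupport h → h x = 0 := by
  filter_upwards [ae_nonpos_of_notMem_measSupport hMCP.aemeasurable] with x hx hxS
  exact (hx hxS).antisymm (hMCP.1 x)

lemma mul_le_of_mem (hMCP : IsMCPDensity K N h) {z y s : ℝ} (hz : z ∈ measSupport h)
    (hy : y ∈ measSupport h) (hs : s ∈ Icc 0 1) :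
    (sKappa (K / (N - 1)) (s * |y - z|) / sKappa (K / (N - 1)) |y - z|) ^ (N - 1) * h y ≤
      h (z + s * (y - z)) := by
  have hcontract := (hMCP.2.2 y hy z hz).2 (1 - s) ⟨sub_nonneg.mpr hs.2, sub_le_self 1 hs.1⟩
  rw [sub_sub_cancel, abs_sub_comm z y] at hcontract
  convert hcontract using 2
  ring

lemma sKappa_pos_of_mem_Ioc (hMCP : IsMCPDensity K N h) (hN : 1 < N) {z y θ : ℝ}
    (hz : z ∈ measSupport h) (hy : y ∈ measSupport h) (hθ : θ ∈ Ioc 0 |y - z|) :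
    0 < sKappa (K / (N - 1)) θ := by
  refine sKappa_pos hθ.1 fun hκ => hθ.2.trans_lt ((hMCP.2.2 z hz y hy).1 ?_ ?_)
  · exact (div_pos_iff_of_pos_right (sub_pos.mpr hN)).mp hκ
  · exact (sub_ne_zero.mp (abs_pos.mp (hθ.1.trans_le hθ.2))).symm

lemma pos_of_mem_openSegment (hMCP : IsMCPDensity K N h) (hN : 1 < N) {x z y : ℝ}
    (hx : x ∈ measSupport h) (hx0 : 0 < h x) (hz : z ∈ measSupport h) (hxz : x ≠ z)
    (hy : y ∈ openSegment ℝ x z) : 0 < h y := by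
  obtain ⟨s, t, hs, ht, hst, rfl⟩ := hy
  have hdist : 0 < |x - z| := abs_pos.mpr (sub_ne_zero.mpr hxz)
  have hs1 : s ≤ 1 := by linarith
  have hratio : 0 < sKappa (K / (N - 1)) (s * |x - z|) / sKappa (K / (N - 1)) |x - z| :=
    div_pos (hMCP.sKappa_pos_of_mem_Ioc hN hz hx
        ⟨mul_pos hs hdist, mul_le_of_le_one_left hdist.le hs1⟩)
      (hMCP.sKappa_pos_of_mem_Ioc hN hz hx ⟨hdist, le_rfl⟩)
  have hpoint : s • x + t • z = z + s * (x - z) := by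
    rw [smul_eq_mul, smul_eq_mul]
    linear_combination z * hst
  rw [hpoint]
  exact (mul_pos (Real.rpow_pos_of_pos hratio _) hx0).trans_le
    (hMCP.mul_le_of_mem hz hx ⟨hs.le, hs1⟩)

lemma starConvex_measSupport (hMCP : IsMCPDensity K N h) (hN : 1 < N) {x : ℝ}
    (hx : x ∈ measSupport h) (hx0 : 0 < h x) : StarConvex ℝ x (measSupport h) := by
  refine (starConvex_iff_openSegment_subset hx).mpr fun z hz => ?_
  rcases eq_or_ne x z with rfl | hxz
  · rw [openSegment_same]
    exact singleton_subset_iff.mpr hx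
  · refine subset_measSupport_of_isOpen hMCP.aemeasurable ?_
      fun y => hMCP.pos_of_mem_openSegment hN hx hx0 hz hxz
    rw [openSegment_eq_Ioo' hxz]
    exact isOpen_Ioo

lemma exists_measSupport_eq_Icc (hMCP : IsMCPDensity K N h) (hN : 1 < N)
    (hne : (measSupport h).Nonempty) (hbdd : Bornology.IsBounded (measSupport h)) :
    ∃ a b, a < b ∧ measSupport h = Icc a b := by
  obtain ⟨x, hx, hx0⟩ := exists_mem_measSupport_pos hMCP.aemeasurable hne
  have hconn : IsConnected (measSupport h) :=
    ((hMCP.starConvex_measSupport hN hx hx0).isPathConnected hx).isConnected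
  have hclosed : IsClosed (measSupport h) := measSupport_eq_support h ▸ Measure.isClosed_support
  have hIcc := eq_Icc_of_connected_compact hconn
    (Metric.isCompact_of_isClosed_isBounded hclosed hbdd)
  refine ⟨_, _, lt_of_not_ge fun hle => ?_, hIcc⟩
  refine not_ae_nonpos_of_nonempty_measSupport hMCP.aemeasurable hne ?_
  have hnull : volume (measSupport h) = 0 := by
    rw [hIcc, Real.volume_Icc, ENNReal.ofReal_eq_zero]
    exact sub_nonpos.mpr hle
  filter_upwards [ae_nonpos_of_notMem_measSupport hMCP.aemeasurable,
    measure_eq_zero_iff_ae_notMem.mp hnull] with y hy hyS using hy hyS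

lemma antitoneOn_div_sKappa_rpow (hMCP : IsMCPDensity K N h) (hN : 1 < N) {z ε L : ℝ}
    (hε : |ε| = 1) (hz : z ∈ measSupport h) (hray : ∀ u ∈ Ioc 0 L, z + ε * u ∈ measSupport h) :
    AntitoneOn (fun u => h (z + ε * u) / sKappa (K / (N - 1)) u ^ (N - 1)) (Ioc 0 L) := by
  intro x hx y hy hxy
  have hdist : |z + ε * y - z| = y := by
    rw [add_sub_cancel_left, abs_mul, hε, one_mul, abs_of_pos hy.1]
  have hsx : 0 < sKappa (K / (N - 1)) x :=
    hMCP.sKappa_pos_of_mem_Ioc hN hz (hray y hy) ⟨hx.1, hdist.symm ▸ hxy⟩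
  have hsy : 0 < sKappa (K / (N - 1)) y :=
    hMCP.sKappa_pos_of_mem_Ioc hN hz (hray y hy) ⟨hy.1, hdist.ge⟩
  have hcontract := hMCP.mul_le_of_mem hz (hray y hy) (s := x / y)
    ⟨(div_pos hx.1 hy.1).le, (div_le_one hy.1).mpr hxy⟩
  have hpoint : z + x / y * (z + ε * y - z) = z + ε * x := by
    rw [add_sub_cancel_left, mul_left_comm, div_mul_cancel₀ x hy.1.ne']
  rw [hdist, hpoint, div_mul_cancel₀ x hy.1.ne', Real.div_rpow hsx.le hsy.le,
    div_mul_eq_mul_div, mul_div_assoc] at hcontract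
  exact (le_div_iff₀' (Real.rpow_pos_of_pos hsx _)).mpr hcontract

section Comparison

variable {z ε α D : ℝ}

lemma antitoneOn_comp_mul_div_sKappa_rpow (hMCP : IsMCPDensity K N h) (hN : 1 < N) (hε : |ε| = 1)
    (hα : α ∈ Ioc 0 1) (hs : ∀ θ ∈ Ioc 0 D, 0 < sKappa (K / (N - 1)) θ)
    (hratio : AntitoneOn (fun y => sKappa (K / (N - 1)) (α * y) / sKappa (K / (N - 1)) y) (Ioc 0 D))
    (hz : z ∈ measSupport h) (hray : ∀ u ∈ Ioc 0 (α * D), z + ε * u ∈ measSupport h) :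
    AntitoneOn (fun y => h (z + ε * α * y) / sKappa (K / (N - 1)) y ^ (N - 1)) (Ioc 0 D) := by
  have hscale (y : ℝ) (hy : y ∈ Ioc 0 D) : α * y ∈ Ioc 0 (α * D) :=
    ⟨mul_pos hα.1 hy.1, mul_le_mul_of_nonneg_left hy.2 hα.1.le⟩
  have hsα (y : ℝ) (hy : y ∈ Ioc 0 D) : 0 < sKappa (K / (N - 1)) (α * y) :=
    hs _ ⟨mul_pos hα.1 hy.1, (mul_le_of_le_one_left hy.1.le hα.2).trans hy.2⟩
  have hfactor (y : ℝ) (hy : y ∈ Ioc 0 D) : h (z + ε * α * y) / sKappa (K / (N - 1)) y ^ (N - 1) =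
      h (z + ε * (α * y)) / sKappa (K / (N - 1)) (α * y) ^ (N - 1) *
        (sKappa (K / (N - 1)) (α * y) / sKappa (K / (N - 1)) y) ^ (N - 1) := by
    rw [Real.div_rpow (hsα y hy).le (hs y hy).le, mul_assoc ε,
      div_mul_div_cancel₀ (Real.rpow_pos_of_pos (hsα y hy) _).ne']
  have hratio_nonneg (y : ℝ) (hy : y ∈ Ioc 0 D) :
      0 ≤ sKappa (K / (N - 1)) (α * y) / sKappa (K / (N - 1)) y :=
    (div_pos (hsα y hy) (hs y hy)).le
  intro x hx y hy hxy
  simp only [hfactor x hx, hfactor y hy]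
  refine mul_le_mul ?_ ?_ (Real.rpow_nonneg (hratio_nonneg y hy) _) ?_
  · exact hMCP.antitoneOn_div_sKappa_rpow hN hε hz hray (hscale x hx) (hscale y hy)
      (mul_le_mul_of_nonneg_left hxy hα.1.le)
  · exact Real.rpow_le_rpow (hratio_nonneg y hy) (hratio hx hy hxy) (sub_nonneg.mpr hN.le)
  · exact div_nonneg (hMCP.1 _) (Real.rpow_nonneg (hsα x hx).le _)

lemma mixedPoincare_half (hMCP : IsMCPDensity K N h) (hN : 1 < N) (hD : 0 < D) (hε : |ε| = 1)
    (hα : α ∈ Ioc 0 1) (hs : ∀ θ ∈ Ioc 0 D, 0 < sKappa (K / (N - 1)) θ)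
    (hratio : AntitoneOn (fun y => sKappa (K / (N - 1)) (α * y) / sKappa (K / (N - 1)) y) (Ioc 0 D))
    (hz : z ∈ measSupport h) (hray : ∀ u ∈ Ioc 0 (α * D), z + ε * u ∈ measSupport h) :
    MixedPoincare h (z + ε * α * (D / 2)) (z + ε * α * D)
      (poincareConst (modelDensity K N D) univ) := by
  have hs0 : ∀ θ ∈ Icc 0 D, 0 ≤ sKappa (K / (N - 1)) θ := fun θ => sKappa_nonneg_of_pos hs
  have hlam := poincareConst_modelDensity_nonneg hs0
  have hsub : Icc (D / 2) D ⊆ Ioc 0 D := fun y hy => ⟨(half_pos hD).trans_le hy.1, hy.2⟩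
  have hscaled : MixedPoincare (fun y => h (z + ε * α * y)) (D / 2) D
      (poincareConst (modelDensity K N D) univ) := by
    refine (mixedPoincare_modelDensity hN.le hD.le hs0).of_antitoneOn_div hlam (half_le_self hD.le)
      ((locallyIntegrable_modelDensity hN.le).integrableOn_isCompact isCompact_Icc)
      (fun y hy => ?_) (fun y _ => hMCP.1 _) ?_
    · rw [modelDensity_of_mem_Icc hy]
      exact Real.rpow_pos_of_pos (hs y (hsub hy)) _
    · refine ((hMCP.antitoneOn_comp_mul_div_sKappa_rpow hN hε hα hs hratio hz hray).mono
        hsub).congr fun y hy => ?_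
      simp only [modelDensity_of_mem_Icc hy]
  have hβ_sq : (ε * α) ^ 2 = α ^ 2 := by rw [mul_pow, ← sq_abs ε, hε, one_pow, one_mul]
  have hβ : ε * α ≠ 0 := pow_ne_zero_iff two_ne_zero |>.mp (hβ_sq ▸ (pow_pos hα.1 2).ne')
  refine (hscaled.of_comp_affine hβ).mono_const (fun x _ => hMCP.1 x) ?_
  rw [hβ_sq]
  exact le_div_self hlam (pow_pos hα.1 2) (pow_le_one₀ hα.1.le hα.2)

lemma integral_pos (hMCP : IsMCPDensity K N h) (hint : Integrable h)
    (hne : (measSupport h).Nonempty) : 0 < ∫ x, h x := by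
  refine (integral_nonneg hMCP.1).lt_of_ne' fun hzero => ?_
  refine not_ae_nonpos_of_nonempty_measSupport hMCP.aemeasurable hne ?_
  filter_upwards [(integral_eq_zero_iff_of_nonneg hMCP.1 hint).mp hzero] with x hx using hx.le

lemma poincareConst_modelDensity_le {a b : ℝ} (hMCP : IsMCPDensity K N h) (hN : 1 < N) (hD : 0 < D)
    (hα : α ∈ Ioc 0 1) (hs : ∀ θ ∈ Ioc 0 D, 0 < sKappa (K / (N - 1)) θ)
    (hratio : AntitoneOn (fun y => sKappa (K / (N - 1)) (α * y) / sKappa (K / (N - 1)) y) (Ioc 0 D))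
    (hS : measSupport h = Icc a b) (hab : α * D = b - a) :
    poincareConst (modelDensity K N D) univ ≤ poincareConst h univ := by
  have hlt : a < b := sub_pos.mp (hab ▸ mul_pos hα.1 hD)
  have hhi : IntegrableOn h (Icc a b) := hMCP.2.1.integrableOn_isCompact isCompact_Icc
  have hh0 : ∀ᵐ x, x ∉ Icc a b → h x = 0 := hS ▸ hMCP.ae_eq_zero_of_notMem_measSupport
  have hright : MixedPoincare h ((a + b) / 2) b (poincareConst (modelDensity K N D) univ) := by
    have hhalf := hMCP.mixedPoincare_half hN hD abs_one hα hs hratio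
      (hS ▸ left_mem_Icc.mpr hlt.le) fun u hu => hS ▸ ⟨by linarith [hu.1], by linarith [hu.2]⟩
    convert hhalf using 1 <;> linarith
  have hleft : MixedPoincare h ((a + b) / 2) a (poincareConst (modelDensity K N D) univ) := by
    have hhalf := hMCP.mixedPoincare_half hN hD (ε := -1) (by simp) hα hs hratio
      (hS ▸ right_mem_Icc.mpr hlt.le) fun u hu => hS ▸ ⟨by linarith [hu.2], by linarith [hu.1]⟩
    convert hhalf using 1 <;> linarith
  have hint : Integrable h := hhi.integrable_of_ae_notMem_eq_zero hh0
  have hne : (measSupport h).Nonempty := hS ▸ nonempty_Icc.mpr hlt.le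
  refine le_poincareConst_univ hMCP.1 hhi hh0 (hMCP.integral_pos hint hne) fun C g hg hmean => ?_
  exact hleft.mul_integral_sq_le hright
    (poincareConst_modelDensity_nonneg fun θ => sKappa_nonneg_of_pos hs)
    ⟨by linarith, by linarith⟩ (fun x _ => hMCP.1 x) hhi hg hmean

lemma poincareConst_modelDensity_le_of_nonpos {a b : ℝ} (hMCP : IsMCPDensity K N h) (hN : 1 < N)
    (hK : K ≤ 0) (hS : measSupport h = Icc a b) (hab : a < b) (hD : b - a ≤ D) :
    poincareConst (modelDensity K N D) univ ≤ poincareConst h univ := by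
  have hκ : K / (N - 1) ≤ 0 := div_nonpos_of_nonpos_of_nonneg hK (sub_nonneg.mpr hN.le)
  have hD0 : 0 < D := (sub_pos.mpr hab).trans_le hD
  have hα : (b - a) / D ∈ Ioc 0 1 := ⟨div_pos (sub_pos.mpr hab) hD0, (div_le_one hD0).mpr hD⟩
  exact hMCP.poincareConst_modelDensity_le hN hD0 hα
    (fun θ hθ => sKappa_pos hθ.1 fun hpos => absurd hpos hκ.not_gt)
    ((antitoneOn_sKappa_mul_div_sKappa hκ (Ioc_subset_Icc_self hα)).mono Ioc_subset_Ioi_self)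
    hS (div_mul_cancel₀ _ hD0.ne')

lemma poincareConst_modelDensity_length_le {a b : ℝ} (hMCP : IsMCPDensity K N h) (hN : 1 < N)
    (hS : measSupport h = Icc a b) (hab : a < b) :
    poincareConst (modelDensity K N (b - a)) univ ≤ poincareConst h univ := by
  have hs : ∀ θ ∈ Ioc 0 (b - a), 0 < sKappa (K / (N - 1)) θ := fun θ hθ =>
    hMCP.sKappa_pos_of_mem_Ioc hN (hS ▸ left_mem_Icc.mpr hab.le) (hS ▸ right_mem_Icc.mpr hab.le)
      ⟨hθ.1, hθ.2.trans (le_abs_self _)⟩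
  refine hMCP.poincareConst_modelDensity_le hN (sub_pos.mpr hab) ⟨one_pos, le_rfl⟩ hs
    (fun x hx y hy _ => ?_) hS (one_mul _)
  simp only [one_mul, div_self (hs x hx).ne', div_self (hs y hy).ne', le_refl]

end Comparison

end IsMCPDensity

end

/-- Spectral-gap comparison for `MCP(K,N)` densities of diameter at most `D`
(Corollary 4.10). -/
theorem stmt_9 (K N D : ℝ) (hN : 1 < N) (hD : 0 < D)
    (h : ℝ → ℝ) (hMCP : IsMCPDensity K N h)
    (hne : (measSupport h).Nonempty)
    (hbdd : Bornology.IsBounded (measSupport h))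
    (hdiam : Metric.diam (measSupport h) ≤ D) :
    (K ≤ 0 → poincareConst (modelDensity K N D) Set.univ ≤ poincareConst h Set.univ) ∧
    (0 < K →
      sInf ((fun D' => poincareConst (modelDensity K N D') Set.univ) ''
          Set.Ioc 0 (min D (Real.pi / Real.sqrt (K / (N - 1)))))
        ≤ poincareConst h Set.univ) := by
  obtain ⟨a, b, hab, hS⟩ := hMCP.exists_measSupport_eq_Icc hN hne hbdd
  have hlength : b - a ≤ D := by rwa [hS, Real.diam_Icc hab.le] at hdiam
  refine ⟨fun hK => hMCP.poincareConst_modelDensity_le_of_nonpos hN hK hS hab hlength,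
    fun hK => ?_⟩
  have hlength_lt : b - a < Real.pi / Real.sqrt (K / (N - 1)) :=
    (le_abs_self _).trans_lt ((hMCP.2.2 a (hS ▸ Set.left_mem_Icc.mpr hab.le) b
      (hS ▸ Set.right_mem_Icc.mpr hab.le)).1 hK hab.ne)
  have hbddBelow : BddBelow ((fun D' => poincareConst (modelDensity K N D') Set.univ) ''
      Set.Ioc 0 (min D (Real.pi / Real.sqrt (K / (N - 1))))) := by
    refine ⟨0, Set.forall_mem_image.mpr fun D' hD' => ?_⟩
    exact poincareConst_modelDensity_nonneg fun θ hθ =>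
      sKappa_nonneg hθ.1 fun _ => hθ.2.trans (hD'.2.trans (min_le_right _ _))
  exact (csInf_le hbddBelow (Set.mem_image_of_mem _
    ⟨sub_pos.mpr hab, le_min hlength hlength_lt.le⟩)).trans
      (hMCP.poincareConst_modelDensity_length_le hN hS hab)
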